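/- arXiv:2411.14538 — 5 statements merged into one kernel-verified Lean document; each statement's English description precedes it below -/
import Mathlib

section
/- Over the one-letter alphabet {a}, the language {a} consisting of the single string of length 1 is recognized by some one-way reversible automaton with a single accepting state (1RFA₁), but is not recognized by any one-way permutation automaton (1PerFA). -/
open scoped Classical

/-- Run a partial transition function along a word. -/
def runP {A Q : Type} (d : A → Q → Option Q) (q : Q) (w : List A) : Option Q :=
  w.foldl (fun o a => o.bind (d a)) (some q)

/-- One-way reversible finite automaton (1RFA): a partial deterministic automaton
with a single initial state and injective transition functions. -/
structure RFA (A Q : Type) where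
  start : Q
  next : A → Q → Option Q
  inj : ∀ a q q' r, next a q = some r → next a q' = some r → q = q'
  accept : Set Q

def RFA.Language {A Q : Type} (M : RFA A Q) : Set (List A) :=
  {w | ∃ qf ∈ M.accept, runP M.next M.start w = some qf}

/-- A permutation automaton (1PerFA): every transition function is a totally
defined bijection. -/
def RFA.IsPerm {A Q : Type} (M : RFA A Q) : Prop :=
  (∀ a q, (M.next a q).isSome) ∧ ∀ a r, ∃ q, M.next a q = some r

/-- One-way reversible finite automaton with multiple initial states (MRFA). -/
structure MRFA (A Q : Type) where
  init : Set Q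
  next : A → Q → Option Q
  inj : ∀ a q q' r, next a q = some r → next a q' = some r → q = q'
  accept : Set Q

def MRFA.Language {A Q : Type} (M : MRFA A Q) : Set (List A) :=
  {w | ∃ q0 ∈ M.init, ∃ qf ∈ M.accept, runP M.next q0 w = some qf}

def Rec1RFA (A : Type) (L : Set (List A)) : Prop :=
  ∃ (Q : Type) (_ : Fintype Q) (M : RFA A Q), M.Language = L

def Rec1RFA1 (A : Type) (L : Set (List A)) : Prop :=
  ∃ (Q : Type) (_ : Fintype Q) (M : RFA A Q), M.accept.ncard = 1 ∧ M.Language = L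

def Rec1PerFA (A : Type) (L : Set (List A)) : Prop :=
  ∃ (Q : Type) (_ : Fintype Q) (M : RFA A Q), M.IsPerm ∧ M.Language = L

def Rec1PerFA1 (A : Type) (L : Set (List A)) : Prop :=
  ∃ (Q : Type) (_ : Fintype Q) (M : RFA A Q),
    M.IsPerm ∧ M.accept.ncard = 1 ∧ M.Language = L

def RecMRFA (A : Type) (L : Set (List A)) : Prop :=
  ∃ (Q : Type) (_ : Fintype Q) (M : MRFA A Q), M.Language = L

/-- Sweeping reversible automaton (sRFA), given without its accepting set:
states `Qp` move rightwards, states `Qm` move leftwards; `startT` is the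
transition of the left end-marker function on the initial state, `turnL` its
restriction to `Qm`, and `turnR` is the transition function at the right
end-marker.  All transition functions are partial and injective, and the left
end-marker function is injective on the whole of `{q₀} ∪ Q₋`. -/
structure SRFA (A Qp Qm : Type) where
  start : Qp
  nextP : A → Qp → Option Qp
  nextM : A → Qm → Option Qm
  startT : Option Qp
  turnL : Qm → Option Qp
  turnR : Qp → Option Qm
  injP : ∀ a q q' r, nextP a q = some r → nextP a q' = some r → q = q'
  injM : ∀ a q q' r, nextM a q = some r → nextM a q' = some r → q = q'
  injL : ∀ q q' r, turnL q = some r → turnL q' = some r → q = q'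
  injR : ∀ q q' r, turnR q = some r → turnR q' = some r → q = q'
  startT_ne_turnL : ∀ q r, startT = some r → turnL q ≠ some r

/-- One step of a sweeping automaton on input `⊢w⊣`: a configuration is a state
together with a head position in `{0, 1, …, |w| + 1}`, where position `0` is the
left end-marker, position `i` with `1 ≤ i ≤ |w|` carries the `i`-th input
symbol, and position `|w| + 1` is the right end-marker.  The result is `none`
when the corresponding transition is undefined and the computation halts. -/
noncomputable def SRFA.step {A Qp Qm : Type} (M : SRFA A Qp Qm) (w : List A) :
    (Qp ⊕ Qm) × ℕ → Option ((Qp ⊕ Qm) × ℕ)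
  | (Sum.inl q, i) =>
      if i = 0 then
        if q = M.start then M.startT.map (fun p => (Sum.inl p, 1)) else none
      else if i = w.length + 1 then
        (M.turnR q).map (fun r => (Sum.inr r, w.length))
      else
        (w[i - 1]?.bind (fun a => M.nextP a q)).map (fun p => (Sum.inl p, i + 1))
  | (Sum.inr q, i) =>
      if i = 0 then (M.turnL q).map (fun p => (Sum.inl p, 1))
      else if i = w.length + 1 then none
      else (w[i - 1]?.bind (fun a => M.nextM a q)).map (fun r => (Sum.inr r, i - 1))

/-- The configuration reached after `n` steps of the computation on `w`,
starting in the initial state at the left end-marker (or `none` if the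
computation has halted before). -/
noncomputable def SRFA.steps {A Qp Qm : Type} (M : SRFA A Qp Qm) (w : List A) :
    ℕ → Option ((Qp ⊕ Qm) × ℕ)
  | 0 => some (Sum.inl M.start, 0)
  | n + 1 => (M.steps w n).bind (M.step w)

/-- Acceptance of an ordinary sRFA: the computation halts at the right
end-marker in an accepting state `q ∈ F ⊆ Q₊`. -/
def SRFA.AcceptsR {A Qp Qm : Type} (M : SRFA A Qp Qm) (F : Set Qp) (w : List A) : Prop :=
  ∃ n q, M.steps w n = some (Sum.inl q, w.length + 1) ∧ q ∈ F ∧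
    M.step w (Sum.inl q, w.length + 1) = none

def SRFA.LangR {A Qp Qm : Type} (M : SRFA A Qp Qm) (F : Set Qp) : Set (List A) :=
  {w | M.AcceptsR F w}

/-- Acceptance of an sRFA with acceptance at both sides: the computation halts
at either end-marker in an accepting state `c ∈ F ⊆ Q₊ ∪ Q₋`. -/
def SRFA.AcceptsB {A Qp Qm : Type} (M : SRFA A Qp Qm) (F : Set (Qp ⊕ Qm)) (w : List A) : Prop :=
  ∃ n c i, M.steps w n = some (c, i) ∧ c ∈ F ∧ (i = 0 ∨ i = w.length + 1) ∧
    M.step w (c, i) = none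

def SRFA.LangB {A Qp Qm : Type} (M : SRFA A Qp Qm) (F : Set (Qp ⊕ Qm)) : Set (List A) :=
  {w | M.AcceptsB F w}

def RecSRFA (A : Type) (L : Set (List A)) : Prop :=
  ∃ (Qp Qm : Type) (_ : Fintype Qp) (_ : Fintype Qm) (M : SRFA A Qp Qm) (F : Set Qp),
    M.LangR F = L

/-- The unary language `{a}`. -/
def singleA : Set (List Unit) := {[()]}

/-!
A word `w` is recognized by deleting its letters one at a time: a suffix of `w` is determined by the
letter deleted from it and what remains, so this automaton is reversible.

In a finite permutation automaton every word `u` acts as a permutation of finite order, so some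
power `u ^ n` with `0 < n` acts trivially and may be inserted anywhere without affecting acceptance.
Hence a nonempty language of such an automaton has no longest word.
-/

section Run

variable {A Q : Type} {d : A → Q → Option Q}

theorem runP_eq_foldlM (q : Q) (w : List A) : runP d q w = w.foldlM (fun p a => d a p) q := by
  induction w using List.reverseRecOn with
  | nil => rfl
  | append_singleton w a ih =>
    rw [List.foldlM_append, ← ih]
    simp [runP]

theorem runP_cons (q : Q) (a : A) (w : List A) :
    runP d q (a :: w) = (d a q).bind fun p => runP d p w := by
  simp only [runP_eq_foldlM, List.foldlM_cons, Option.bind_eq_bind]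

theorem runP_append (q : Q) (u v : List A) :
    runP d q (u ++ v) = (runP d q u).bind fun p => runP d p v := by
  simp only [runP_eq_foldlM, List.foldlM_append, Option.bind_eq_bind]

theorem runP_flatten_replicate {u : List A} {f : Q → Q}
    (hf : ∀ q, runP d q u = some (f q)) (n : ℕ) (q : Q) :
    runP d q (List.replicate n u).flatten = some (f^[n] q) := by
  induction n generalizing q with
  | zero => rfl
  | succ n ih =>
    rw [List.replicate_succ, List.flatten_cons, runP_append, hf, Option.bind_some, ih,
      Function.iterate_succ_apply]

end Run

section WordAutomaton

variable {A : Type} {w : List A}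

/-- The partial transition function on the suffixes of `w` that deletes the leading letter `a`;
it is undefined on suffixes that do not begin with `a`. -/
noncomputable def deleteHead (a : A) : {s // s <:+ w} → Option {s // s <:+ w}
  | ⟨[], _⟩ => none
  | ⟨b :: t, h⟩ => if b = a then some ⟨t, (List.suffix_cons b t).trans h⟩ else none

theorem deleteHead_eq_some_iff {a : A} {s r : {s // s <:+ w}} :
    deleteHead a s = some r ↔ s.1 = a :: r.1 := by
  rcases s with ⟨_ | ⟨b, t⟩, h⟩ <;> simp [deleteHead, Subtype.ext_iff]

/-- The one-way reversible automaton recognizing the single word `w`. Its states are the suffixes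
of `w`, each standing for the part of `w` still to be read. -/
noncomputable def wordRFA (w : List A) : RFA A {s // s <:+ w} where
  start := ⟨w, List.suffix_rfl⟩
  next := deleteHead
  inj _ _ _ _ h h' :=
    Subtype.ext ((deleteHead_eq_some_iff.mp h).trans (deleteHead_eq_some_iff.mp h').symm)
  accept := {⟨[], List.nil_suffix⟩}

theorem runP_deleteHead_eq_some_iff {v : List A} {s r : {s // s <:+ w}} :
    runP deleteHead s v = some r ↔ s.1 = v ++ r.1 := by
  induction v generalizing s with
  | nil => simp [runP, Subtype.ext_iff]
  | cons a v ih =>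
    simp only [runP_cons, Option.bind_eq_some_iff, deleteHead_eq_some_iff, ih, List.cons_append]
    constructor
    · rintro ⟨t, hs, ht⟩
      rw [hs, ht]
    · intro hs
      have suffix_w : v ++ r.1 <:+ w := (List.suffix_cons a _).trans (hs ▸ s.2)
      exact ⟨⟨v ++ r.1, suffix_w⟩, hs, rfl⟩

theorem wordRFA_language (w : List A) : (wordRFA w).Language = {w} := by
  ext v
  simp [RFA.Language, wordRFA, runP_deleteHead_eq_some_iff, eq_comm]

theorem rec1RFA1_singleton (w : List A) : Rec1RFA1 A {w} := by
  have finite_suffixes : {s | s <:+ w}.Finite := by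
    simpa only [List.mem_tails] using w.tails.finite_toSet
  exact ⟨_, finite_suffixes.fintype, wordRFA w, Set.ncard_singleton _, wordRFA_language w⟩

end WordAutomaton

section PermutationAutomaton

variable {A Q : Type} {M : RFA A Q}

theorem RFA.IsPerm.exists_perm_next (hM : M.IsPerm) (a : A) :
    ∃ σ : Equiv.Perm Q, ∀ q, M.next a q = some (σ q) := by
  choose f hf using fun q => Option.isSome_iff_exists.mp (hM.1 a q)
  have f_injective : Function.Injective f := fun q q' h => M.inj a q q' (f q) (hf q) (h ▸ hf q')
  have f_surjective : Function.Surjective f := fun r =>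
    (hM.2 a r).imp fun q hq => Option.some_injective _ ((hf q).symm.trans hq)
  exact ⟨Equiv.ofBijective f ⟨f_injective, f_surjective⟩, hf⟩

theorem RFA.IsPerm.exists_perm_runP (hM : M.IsPerm) (u : List A) :
    ∃ σ : Equiv.Perm Q, ∀ q, runP M.next q u = some (σ q) := by
  induction u with
  | nil => exact ⟨1, fun _ => rfl⟩
  | cons a u ih =>
    obtain ⟨σ, hσ⟩ := hM.exists_perm_next a
    obtain ⟨τ, hτ⟩ := ih
    exact ⟨τ * σ, fun q => by rw [runP_cons, hσ, Option.bind_some, hτ, Equiv.Perm.mul_apply]⟩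

theorem RFA.IsPerm.exists_runP_flatten_replicate_eq_self [Finite Q] (hM : M.IsPerm)
    (u : List A) :
    ∃ n, 0 < n ∧ ∀ q, runP M.next q (List.replicate n u).flatten = some q := by
  obtain ⟨σ, hσ⟩ := hM.exists_perm_runP u
  refine ⟨orderOf σ, orderOf_pos σ, fun q => ?_⟩
  rw [runP_flatten_replicate hσ, Equiv.Perm.iterate_eq_pow, pow_orderOf_eq_one,
    Equiv.Perm.one_apply]

theorem RFA.IsPerm.exists_insert_flatten_replicate_mem_language_iff [Finite Q] (hM : M.IsPerm)
    (u : List A) :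
    ∃ n, 0 < n ∧ ∀ x y,
      x ++ (List.replicate n u).flatten ++ y ∈ M.Language ↔ x ++ y ∈ M.Language := by
  obtain ⟨n, n_pos, run_eq_self⟩ := hM.exists_runP_flatten_replicate_eq_self u
  refine ⟨n, n_pos, fun x y => ?_⟩
  simp only [RFA.Language, Set.mem_ofPred_eq, runP_append, run_eq_self, Option.bind_fun_some]

theorem Rec1PerFA.infinite [Nonempty A] {L : Set (List A)} (hL : Rec1PerFA A L)
    (L_nonempty : L.Nonempty) : L.Infinite := by
  obtain ⟨Q, _, M, hM, rfl⟩ := hL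
  intro L_finite
  obtain ⟨w, w_mem, w_longest⟩ := Set.exists_max_image _ List.length L_finite L_nonempty
  obtain ⟨a⟩ := ‹Nonempty A›
  obtain ⟨n, n_pos, pump⟩ := hM.exists_insert_flatten_replicate_mem_language_iff [a]
  have length_le : n + w.length ≤ w.length := by simpa using w_longest _ ((pump [] w).mpr w_mem)
  omega

end PermutationAutomaton

theorem stmt1_general {A : Type} [Nonempty A] (w : List A) :
    Rec1RFA1 A {w} ∧ ¬ Rec1PerFA A {w} :=
  ⟨rec1RFA1_singleton w, fun h => h.infinite (Set.singleton_nonempty w) (Set.finite_singleton w)⟩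

/-- `{a}` is recognized by a 1RFA with one accepting state, but by
no 1PerFA. -/
theorem stmt1 : Rec1RFA1 Unit singleA ∧ ¬ Rec1PerFA Unit singleA :=
  stmt1_general [()]
end

section
/- Over the one-letter alphabet {a}, the language (a³)* ∪ a(a³)* = { aⁿ : n ≡ 0 or 1 (mod 3) } is recognized by some one-way permutation automaton (1PerFA), but is not recognized by any one-way reversible automaton with a single accepting state (1RFA₁); in particular every 1RFA recognizing this language has at least two accepting states. -/
open scoped Classical

/-- The unary language `(a³)* ∪ a(a³)* = {aⁿ : n ≡ 0 or 1 (mod 3)}`. -/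
def Lmod3 : Set (List Unit) := {w | w.length % 3 = 0 ∨ w.length % 3 = 1}

/-
Adding `1` in `ZMod 3` is a permutation, and reading a word by iterating it counts the length
modulo `3`. Conversely, words leading to the same state have the same continuations into the
language. The accepted words `ε` and `a` do not, since `a` is accepted and `aa` is not, so the
accepting states they reach are distinct.
-/

section PartialDFA

variable {A Q : Type}

theorem runP_append_of_eq_some {d : A → Q → Option Q} {q p : Q} {u : List A}
    (h : runP d q u = some p) (w : List A) : runP d q (u ++ w) = runP d p w := by
  rw [runP, List.foldl_append]
  exact congrArg (fun o => w.foldl (fun o a => o.bind (d a)) o) h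

theorem runP_some (f : A → Q → Q) (q : Q) (w : List A) :
    runP (fun a p => some (f a p)) q w = some (w.foldl (fun p a => f a p) q) :=
  List.foldl_hom some fun _ _ => rfl

/-- The language of the partial deterministic automaton with transition function `d`, initial state
`q₀` and accepting states `F`. Unlike in `RFA.Language`, the transitions need not be injective. -/
def partialDFALanguage (d : A → Q → Option Q) (q₀ : Q) (F : Set Q) : Set (List A) :=
  {w | ∃ q ∈ F, runP d q₀ w = some q}

theorem nontrivial_of_append_mem_partialDFALanguage {d : A → Q → Option Q} {q₀ : Q} {F : Set Q}
    {u v w : List A} (hu : u ∈ partialDFALanguage d q₀ F) (hv : v ∈ partialDFALanguage d q₀ F)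
    (huw : u ++ w ∈ partialDFALanguage d q₀ F) (hvw : v ++ w ∉ partialDFALanguage d q₀ F) :
    F.Nontrivial := by
  obtain ⟨p, hp, hrun_u⟩ := hu
  obtain ⟨q, hq, hrun_v⟩ := hv
  refine ⟨p, hp, q, hq, ?_⟩
  rintro rfl
  obtain ⟨r, hr, hrun_uw⟩ := huw
  refine hvw ⟨r, hr, ?_⟩
  rwa [runP_append_of_eq_some hrun_v, ← runP_append_of_eq_some hrun_u]

end PartialDFA

namespace RFA

variable {A Q : Type}

/-- The permutation automaton in which the letter `a` acts on the states by `σ a`. Every 1PerFA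
is of this form: the total bijections of `RFA.IsPerm` are bundled here as permutations. -/
def ofPerm (σ : A → Equiv.Perm Q) (q₀ : Q) (F : Set Q) : RFA A Q where
  start := q₀
  next a q := some (σ a q)
  inj a _ _ _ h h' := (σ a).injective (Option.some.inj (h.trans h'.symm))
  accept := F

theorem isPerm_ofPerm (σ : A → Equiv.Perm Q) (q₀ : Q) (F : Set Q) : (ofPerm σ q₀ F).IsPerm :=
  ⟨fun _ _ => rfl, fun a r => ⟨(σ a).symm r, congrArg some ((σ a).apply_symm_apply r)⟩⟩

theorem language_ofPerm (σ : A → Equiv.Perm Q) (q₀ : Q) (F : Set Q) :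
    (ofPerm σ q₀ F).Language = {w | w.foldl (fun q a => σ a q) q₀ ∈ F} := by
  ext w
  simp [Language, ofPerm, runP_some]

end RFA

theorem rec1PerFA_natCast_length_mem (A : Type) (n : ℕ) [NeZero n] (S : Set (ZMod n)) :
    Rec1PerFA A {w | (w.length : ZMod n) ∈ S} := by
  refine ⟨ZMod n, inferInstance, RFA.ofPerm (fun _ => Equiv.addRight 1) 0 S,
    RFA.isPerm_ofPerm _ _ _, ?_⟩
  simp [RFA.language_ofPerm, List.foldl_const]

theorem Lmod3_eq_natCast_length_mem :
    Lmod3 = {w | (w.length : ZMod 3) ∈ ({0, 1} : Set (ZMod 3))} := by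
  ext w
  have length_eq_zero : (w.length : ZMod 3) = 0 ↔ w.length % 3 = 0 := by
    rw [ZMod.natCast_eq_zero_iff, Nat.dvd_iff_mod_eq_zero]
  have length_eq_one : (w.length : ZMod 3) = 1 ↔ w.length % 3 = 1 := by
    rw [← Nat.cast_one, ZMod.natCast_eq_natCast_iff']
  simp [Lmod3, length_eq_zero, length_eq_one]

theorem nontrivial_of_partialDFALanguage_eq_Lmod3 {Q : Type} {d : Unit → Q → Option Q}
    {q₀ : Q} {F : Set Q} (h : partialDFALanguage d q₀ F = Lmod3) : F.Nontrivial := by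
  have nil_mem : [] ∈ partialDFALanguage d q₀ F := by simp [h, Lmod3]
  have one_mem : [()] ∈ partialDFALanguage d q₀ F := by simp [h, Lmod3]
  have two_notMem : [()] ++ [()] ∉ partialDFALanguage d q₀ F := by simp [h, Lmod3]
  exact nontrivial_of_append_mem_partialDFALanguage nil_mem one_mem one_mem two_notMem

theorem stmt2_general :
    Rec1PerFA Unit Lmod3 ∧
    ∀ (Q : Type) (d : Unit → Q → Option Q) (q₀ : Q) (F : Set Q),
      partialDFALanguage d q₀ F = Lmod3 → F.Nontrivial :=
  ⟨Lmod3_eq_natCast_length_mem ▸ rec1PerFA_natCast_length_mem Unit 3 {0, 1},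
    fun _ _ _ _ => nontrivial_of_partialDFALanguage_eq_Lmod3⟩

/-- `(a³)* ∪ a(a³)*` is recognized by a 1PerFA but by no 1RFA with a
single accepting state; every 1RFA recognizing it has at least two accepting
states. -/
theorem stmt2 :
    Rec1PerFA Unit Lmod3 ∧ ¬ Rec1RFA1 Unit Lmod3 ∧
    ∀ (Q : Type) [Fintype Q] (M : RFA Unit Q), M.Language = Lmod3 →
      2 ≤ M.accept.ncard := by
  have two_le (Q : Type) [Fintype Q] (M : RFA Unit Q) (hM : M.Language = Lmod3) :
      2 ≤ M.accept.ncard :=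
    Set.one_lt_ncard_iff_nontrivial.mpr (stmt2_general.2 Q M.next M.start M.accept hM)
  exact ⟨stmt2_general.1, fun ⟨Q, _, M, hcard, hM⟩ => hcard.not_gt (two_le Q M hM), two_le⟩
end

section
/- (Pin's lemma) Let L be a language recognized by some one-way reversible automaton with multiple initial states (MRFA), and suppose there are strings x, z ∈ Σ* and a nonempty string y ∈ Σ⁺ such that x yⁿ z ∈ L for every n ≥ 1. Then xz ∈ L. -/
open scoped Classical

/-!
Each letter acts on the states as a partial injection, hence so does the word `y`. As `Q` is finite,
this partial injection extends to a permutation `σ` of `Q`. If the exponent of the symmetric group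
of `Q` divides `n`, then `σ ^ n = 1`, so reading `yⁿ`, whenever it is possible, leads back to the
state where it began, and the block can be cut out of any accepting run.
-/

/-- Partial functions, encoded by `none` outside the domain, that are injective on their domain. -/
def IsPartialInjective {α β : Type*} (f : α → Option β) : Prop :=
  ∀ a a' b, f a = some b → f a' = some b → a = a'

namespace IsPartialInjective

theorem bind {α β γ : Type*} {f : α → Option β} {g : β → Option γ} (hf : IsPartialInjective f)
    (hg : IsPartialInjective g) : IsPartialInjective fun a => (f a).bind g := by
  intro a a' c h h'
  obtain ⟨b, hab, hbc⟩ := Option.bind_eq_some_iff.1 h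
  obtain ⟨b', hab', hbc'⟩ := Option.bind_eq_some_iff.1 h'
  obtain rfl := hg b b' c hbc hbc'
  exact hf a a' b hab hab'

theorem exists_perm_extending {α : Type*} [Finite α] {f : α → Option α}
    (hf : IsPartialInjective f) : ∃ σ : Equiv.Perm α, ∀ a b, f a = some b → σ a = b := by
  let g : {a // (f a).isSome} → α := fun a => (f a).get a.2
  have hg : Function.Injective g := fun a a' h =>
    Subtype.ext (hf a a' (g a) (Option.some_get a.2).symm (h ▸ (Option.some_get a'.2).symm))
  let e : {a // (f a).isSome} ≃ {b // b ∈ Set.range g} := Equiv.ofInjective g hg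
  refine ⟨e.extendSubtype, fun a b hab => ?_⟩
  have ha : (f a).isSome := Option.isSome_of_eq_some hab
  calc e.extendSubtype a = (f a).get ha := e.extendSubtype_apply_of_mem a ha
    _ = b := Option.get_of_eq_some ha hab

end IsPartialInjective

section runP

variable {A Q : Type} {d : A → Q → Option Q}

theorem runP_concat (q : Q) (w : List A) (a : A) :
    runP d q (w ++ [a]) = (runP d q w).bind (d a) :=
  List.foldl_concat ..

theorem runP_append_eq_some {q r : Q} {u v : List A} :
    runP d q (u ++ v) = some r ↔ ∃ p, runP d q u = some p ∧ runP d p v = some r := by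
  rw [runP_append, Option.bind_eq_some_iff]

theorem isPartialInjective_runP (hd : ∀ a, IsPartialInjective (d a)) (w : List A) :
    IsPartialInjective fun q => runP d q w := by
  induction w using List.reverseRecOn with
  | nil => exact fun _ _ _ h h' => Option.some.inj (h.trans h'.symm)
  | append_singleton w a ih => simpa only [runP_concat] using ih.bind (hd a)

theorem perm_pow_apply_of_runP_eq_some {σ : Equiv.Perm Q} {y : List A}
    (hσ : ∀ q r, runP d q y = some r → σ q = r) {n : ℕ} {q r : Q}
    (h : runP d q (List.replicate n y).flatten = some r) : (σ ^ n) q = r := by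
  induction n generalizing q with
  | zero => exact Option.some.inj h
  | succ n ih =>
    rw [List.replicate_succ, List.flatten_cons, runP_append_eq_some] at h
    obtain ⟨p, hqp, hpr⟩ := h
    rw [pow_succ, Equiv.Perm.mul_apply, hσ q p hqp, ih hpr]

theorem eq_of_runP_flatten_replicate_eq_some [Finite Q] (hd : ∀ a, IsPartialInjective (d a))
    {y : List A} {n : ℕ} (hn : Monoid.exponent (Equiv.Perm Q) ∣ n) {q r : Q}
    (h : runP d q (List.replicate n y).flatten = some r) : q = r := by
  obtain ⟨σ, hσ⟩ := (isPartialInjective_runP hd y).exists_perm_extending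
  have hσn : σ ^ n = 1 := Monoid.exponent_dvd_iff_forall_pow_eq_one.1 hn σ
  simpa only [hσn, Equiv.Perm.one_apply] using perm_pow_apply_of_runP_eq_some hσ h

end runP

theorem stmt5_general {A Q : Type} [Finite Q] (M : MRFA A Q) {x y z : List A} {n : ℕ}
    (hn : Monoid.exponent (Equiv.Perm Q) ∣ n)
    (h : x ++ (List.replicate n y).flatten ++ z ∈ M.Language) : x ++ z ∈ M.Language := by
  obtain ⟨q₀, hq₀, qf, hqf, hrun⟩ := h
  obtain ⟨r, hxy, hz⟩ := runP_append_eq_some.1 hrun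
  obtain ⟨p, hx, hy⟩ := runP_append_eq_some.1 hxy
  obtain rfl := eq_of_runP_flatten_replicate_eq_some M.inj hn hy
  exact ⟨q₀, hq₀, qf, hqf, runP_append_eq_some.2 ⟨p, hx, hz⟩⟩

/-- Pin's lemma: if an MRFA accepts `x yⁿ z` for every `n ≥ 1`,
where `y` is nonempty, then it accepts `xz`. -/
theorem stmt5 (A Q : Type) [Fintype Q] (M : MRFA A Q)
    (x y z : List A) (hy : y ≠ [])
    (h : ∀ n : ℕ, 1 ≤ n → x ++ (List.replicate n y).flatten ++ z ∈ M.Language) :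
    x ++ z ∈ M.Language :=
  stmt5_general M dvd_rfl (h _ (Nat.pos_of_ne_zero Monoid.exponent_ne_zero_of_finite))
end

section
/- For every sweeping reversible automaton with acceptance at both sides, with state sets P₊ and P₋ and accepting states E ⊆ P₊ ∪ P₋, there exists an ordinary sweeping reversible automaton (accepting only at the right end-marker) recognizing the same language, whose state sets are Q₊ = P₊ ∪ { p′ : p ∈ E ∩ P₋ } (where p′ is a fresh copy of p) and Q₋ = P₋; in particular |Q₊| = |P₊| + |E ∩ P₋| and |Q₋| = |P₋|. -/
open scoped Classical

/-!
An automaton accepting only on the right can imitate the automaton `M` accepting on both sides,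
except that where `M` halts and accepts at the left end-marker in a state `p ∈ E ∩ P₋`, it turns
into the fresh copy of `p`, which every letter fixes and which halts at the right end-marker. Only
`p` turns into its copy, so reversibility is preserved. Sending each left-accepting configuration
of `M` to the end of the sweep that starts there, and every other configuration to itself, is a
simulation in the sense of `StateTransition.Respects`, hence carries halting configurations to
halting configurations.

Acceptance at the left end-marker in a state of `P₊` escapes this construction. It can only occur
before the first step, when the initial state is accepting and has no transition there; then `M`
accepts every word, and a single right sweep does the same.
-/

namespace SRFA

open StateTransition

variable {A Qp Qm : Type} {w : List A}

section Halting

variable (M : SRFA A Qp Qm)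

/-- The configuration in which the computation of `M` on `w` halts, undefined if the computation
runs forever. -/
noncomputable def haltingConfig (w : List A) : Part ((Qp ⊕ Qm) × ℕ) :=
  eval (M.step w) (Sum.inl M.start, 0)

variable {M}

theorem reaches_iff_exists_steps {c : (Qp ⊕ Qm) × ℕ} :
    Reaches (M.step w) (Sum.inl M.start, 0) c ↔ ∃ n, M.steps w n = some c := by
  constructor
  · intro h
    induction h with
    | refl => exact ⟨0, rfl⟩
    | tail _ hstep ih =>
      obtain ⟨n, hn⟩ := ih
      exact ⟨n + 1, Option.bind_eq_some_iff.mpr ⟨_, hn, hstep⟩⟩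
  · rintro ⟨n, hn⟩
    induction n generalizing c with
    | zero => exact Option.some.inj hn ▸ .refl
    | succ n ih =>
      obtain ⟨d, hd, hstep⟩ := Option.bind_eq_some_iff.mp hn
      exact (ih hd).tail hstep

theorem mem_haltingConfig {c : (Qp ⊕ Qm) × ℕ} :
    c ∈ M.haltingConfig w ↔ (∃ n, M.steps w n = some c) ∧ M.step w c = none := by
  rw [haltingConfig, mem_eval, reaches_iff_exists_steps]

theorem mem_langR_iff {F : Set Qp} :
    w ∈ M.LangR F ↔ ∃ q ∈ F, (Sum.inl q, w.length + 1) ∈ M.haltingConfig w := by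
  simp only [LangR, Set.mem_ofPred_eq, AcceptsR, mem_haltingConfig]
  grind

theorem mem_langB_iff {F : Set (Qp ⊕ Qm)} :
    w ∈ M.LangB F ↔ ∃ c ∈ M.haltingConfig w, c.1 ∈ F ∧ (c.2 = 0 ∨ c.2 = w.length + 1) := by
  simp only [LangB, Set.mem_ofPred_eq, AcceptsB, mem_haltingConfig, Prod.exists]
  grind

theorem step_ne_inl_zero (c : (Qp ⊕ Qm) × ℕ) (q : Qp) : M.step w c ≠ some (Sum.inl q, 0) := by
  obtain ⟨p | p, i⟩ := c <;> simp only [step] <;> split_ifs <;>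
    simp [Option.map_eq_some_iff, -Option.map_bind]

theorem le_length_of_step_eq_inr {c : (Qp ⊕ Qm) × ℕ} {q : Qm} {i : ℕ}
    (h : M.step w c = some (Sum.inr q, i)) : i ≤ w.length := by
  obtain ⟨p | p, j⟩ := c <;> simp only [step] at h <;> split_ifs at h <;>
    grind [Option.map_eq_some_iff]

theorem eq_start_of_reaches_inl_zero {q : Qp}
    (h : Reaches (M.step w) (Sum.inl M.start, 0) (Sum.inl q, 0)) : q = M.start := by
  obtain heq | ⟨c, -, hc⟩ := h.cases_tail
  · simpa using heq
  · exact absurd hc (step_ne_inl_zero c q)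

theorem le_length_of_reaches_inr {q : Qm} {i : ℕ}
    (h : Reaches (M.step w) (Sum.inl M.start, 0) (Sum.inr q, i)) : i ≤ w.length := by
  obtain heq | ⟨c, -, hc⟩ := h.cases_tail
  · simp at heq
  · exact le_length_of_step_eq_inr hc

theorem langB_eq_univ_of_startT_eq_none {E : Set (Qp ⊕ Qm)} (hstart : M.startT = none)
    (hE : Sum.inl M.start ∈ E) : M.LangB E = Set.univ :=
  Set.eq_univ_of_forall fun _ => ⟨0, _, 0, rfl, hE, .inl rfl, by simp [step, hstart]⟩

theorem reaches_right_end_of_nextP_eq_self {q : Qp} (hq : ∀ a, M.nextP a q = some q) :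
    Reaches (M.step w) (Sum.inl q, 1) (Sum.inl q, w.length + 1) := by
  suffices ∀ i ≤ w.length, Reaches (M.step w) (Sum.inl q, 1) (Sum.inl q, i + 1) from
    this _ le_rfl
  intro i hi
  induction i with
  | zero => exact .refl
  | succ i ih =>
    refine (ih (by lia)).tail ?_
    have hlt : i < w.length := hi
    simp [step, hlt, hlt.ne, hq]

end Halting

/-- The automaton that sweeps right once over every input in the state `q`, used to recognize the
language of all words. -/
def sweepRight (A Qm : Type) (q : Qp) : SRFA A Qp Qm where
  start := q
  nextP _ p := some p
  nextM _ _ := none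
  startT := some q
  turnL _ := none
  turnR _ := none
  injP := by simp
  injM := by simp
  injL := by simp
  injR := by simp
  startT_ne_turnL := by simp

theorem sweepRight_langR_singleton (q : Qp) : (sweepRight A Qm q).LangR {q} = Set.univ := by
  refine Set.eq_univ_of_forall fun w => mem_langR_iff.mpr ⟨q, rfl, mem_eval.mpr ⟨?_, ?_⟩⟩
  · have hstart : (sweepRight A Qm q).step w (Sum.inl q, 0) = some (Sum.inl q, 1) := by
      simp [step, sweepRight]
    exact .head hstart (reaches_right_end_of_nextP_eq_self fun _ => rfl)
  · simp [step, sweepRight]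

section AcceptRight

variable (M : SRFA A Qp Qm) (E : Set (Qp ⊕ Qm))

/-- The automaton that behaves like `M`, except that where `M` accepts at the left end-marker in a
state `p ∈ E ∩ Q₋`, it sweeps right in the fresh copy of `p`. -/
noncomputable def acceptRight : SRFA A (Qp ⊕ {p : Qm // Sum.inr p ∈ E}) Qm where
  start := Sum.inl M.start
  nextP a := Sum.elim (fun q => (M.nextP a q).map Sum.inl) (fun p => some (Sum.inr p))
  nextM := M.nextM
  startT := M.startT.map Sum.inl
  turnL p := ((M.turnL p).map Sum.inl).or
    (if h : Sum.inr p ∈ E then some (Sum.inr ⟨p, h⟩) else none)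
  turnR := Sum.elim M.turnR fun _ => none
  injP := by
    have hinj := M.injP
    rintro a (q | q) (q' | q') (r | r) <;> grind [Option.map_eq_some_iff]
  injM := M.injM
  injL := by
    have hinj := M.injL
    rintro q q' (r | r) <;> grind [Option.map_eq_some_iff, Option.or_eq_some_iff]
  injR := by
    have hinj := M.injR
    rintro (q | q) (q' | q') r <;> grind
  startT_ne_turnL := by
    have hne := M.startT_ne_turnL
    rintro q (r | r) <;> grind [Option.map_eq_some_iff, Option.or_eq_some_iff]

/-- The accepting states of `acceptRight`: those of `M` in `Q₊`, and all the fresh copies. -/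
def acceptRightSet : Set (Qp ⊕ {p : Qm // Sum.inr p ∈ E}) :=
  Sum.inl '' {q | Sum.inl q ∈ E} ∪ Set.range Sum.inr

/-- A configuration of `M` regarded as a configuration of `M.acceptRight E`. -/
def embedConfig (c : (Qp ⊕ Qm) × ℕ) : ((Qp ⊕ {p : Qm // Sum.inr p ∈ E}) ⊕ Qm) × ℕ :=
  (c.1.map Sum.inl id, c.2)

/-- The simulation of `M` by `M.acceptRight E` on `w`: a configuration accepting at the left
end-marker corresponds to the right end of the sweep which `M.acceptRight E` starts there, and every
other configuration to itself. -/
noncomputable def simConfig (w : List A) :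
    (Qp ⊕ Qm) × ℕ → ((Qp ⊕ {p : Qm // Sum.inr p ∈ E}) ⊕ Qm) × ℕ
  | (Sum.inl q, i) => (Sum.inl (Sum.inl q), i)
  | (Sum.inr p, i) =>
    if h : i = 0 ∧ M.turnL p = none ∧ Sum.inr p ∈ E then
      (Sum.inl (Sum.inr ⟨p, h.2.2⟩), w.length + 1)
    else (Sum.inr p, i)

variable {M E} {c d : (Qp ⊕ Qm) × ℕ}

variable (M E) in
theorem simConfig_eq_embedConfig_or (w : List A) (c : (Qp ⊕ Qm) × ℕ) :
    M.simConfig E w c = embedConfig E c ∨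
      ∃ p, ∃ h : Sum.inr p ∈ E, c = (Sum.inr p, 0) ∧ M.turnL p = none ∧
        M.simConfig E w c = (Sum.inl (Sum.inr ⟨p, h⟩), w.length + 1) := by
  obtain ⟨q | p, i⟩ := c
  · exact .inl rfl
  · by_cases h : i = 0 ∧ M.turnL p = none ∧ Sum.inr p ∈ E
    · obtain ⟨rfl, hturn, hp⟩ := h
      exact .inr ⟨p, hp, rfl, hturn, by simp [simConfig, hturn, hp]⟩
    · exact .inl (dif_neg h)

theorem acceptRight_step_embedConfig (hc : M.simConfig E w c = embedConfig E c) :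
    (M.acceptRight E).step w (embedConfig E c) = (M.step w c).map (embedConfig E) := by
  obtain ⟨q | p, i⟩ := c
  · by_cases h0 : i = 0
    · by_cases hq : q = M.start <;>
        simp [step, embedConfig, acceptRight, h0, hq, Function.comp_def]
    · cases hw : w[i - 1]? <;>
        simp [step, embedConfig, acceptRight, h0, hw, Function.comp_def, apply_ite (Option.map _)]
  · by_cases h0 : i = 0
    · subst h0
      cases hturn : M.turnL p with
      | none =>
        have hp : Sum.inr p ∉ E := fun hp => by simp [simConfig, embedConfig, hturn, hp] at hc
        simp [step, embedConfig, acceptRight, hturn, hp]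
      | some r => simp [step, embedConfig, acceptRight, hturn]
    · cases hw : w[i - 1]? <;>
        simp [step, embedConfig, acceptRight, h0, hw, Function.comp_def, apply_ite (Option.map _)]

theorem acceptRight_reaches_simConfig :
    Reaches ((M.acceptRight E).step w) (embedConfig E c) (M.simConfig E w c) := by
  obtain heq | ⟨p, hp, rfl, hturn, heq⟩ := simConfig_eq_embedConfig_or M E w c
  · exact heq ▸ .refl
  · have hcopy : (M.acceptRight E).step w (Sum.inr p, 0) =
        some (Sum.inl (Sum.inr ⟨p, hp⟩), 1) := by simp [step, acceptRight, hturn, hp]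
    exact heq ▸ .head hcopy (reaches_right_end_of_nextP_eq_self fun _ => rfl)

theorem acceptRight_reaches₁_simConfig (h : M.step w c = some d) :
    Reaches₁ ((M.acceptRight E).step w) (M.simConfig E w c) (M.simConfig E w d) := by
  obtain heq | ⟨p, -, rfl, hturn, -⟩ := simConfig_eq_embedConfig_or M E w c
  · have hstep : (M.acceptRight E).step w (M.simConfig E w c) = some (embedConfig E d) := by
      rw [heq, acceptRight_step_embedConfig heq, h, Option.map_some]
    exact .head' hstep acceptRight_reaches_simConfig
  · simp [step, hturn] at h

theorem acceptRight_step_simConfig_of_none (h : M.step w c = none) :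
    (M.acceptRight E).step w (M.simConfig E w c) = none := by
  obtain heq | ⟨p, hp, -, -, heq⟩ := simConfig_eq_embedConfig_or M E w c
  · rw [heq, acceptRight_step_embedConfig heq, h, Option.map_none]
  · simp [heq, step, acceptRight]

theorem respects_simConfig :
    Respects (M.step w) ((M.acceptRight E).step w) fun c d => M.simConfig E w c = d := by
  refine fun_respects.mpr fun c => ?_
  cases h : M.step w c with
  | none => exact acceptRight_step_simConfig_of_none h
  | some d => exact acceptRight_reaches₁_simConfig h

theorem acceptRight_haltingConfig :
    (M.acceptRight E).haltingConfig w = (M.haltingConfig w).map (M.simConfig E w) :=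
  tr_eval' (M.step w) _ (M.simConfig E w) respects_simConfig (Sum.inl M.start, 0)

theorem exists_simConfig_inl_eq_right_iff {q : Qp} {i : ℕ} :
    (∃ r ∈ acceptRightSet E, M.simConfig E w (Sum.inl q, i) = (Sum.inl r, w.length + 1)) ↔
      Sum.inl q ∈ E ∧ i = w.length + 1 := by
  simp [simConfig, acceptRightSet]

theorem exists_simConfig_inr_eq_right_iff {p : Qm} {i : ℕ} :
    (∃ r ∈ acceptRightSet E, M.simConfig E w (Sum.inr p, i) = (Sum.inl r, w.length + 1)) ↔
      i = 0 ∧ M.turnL p = none ∧ Sum.inr p ∈ E := by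
  by_cases h : i = 0 ∧ M.turnL p = none ∧ Sum.inr p ∈ E <;> simp [simConfig, acceptRightSet, h]

theorem exists_simConfig_eq_right_iff (hE : M.startT = none → Sum.inl M.start ∉ E)
    (hc : c ∈ M.haltingConfig w) :
    (∃ q ∈ acceptRightSet E, M.simConfig E w c = (Sum.inl q, w.length + 1)) ↔
      c.1 ∈ E ∧ (c.2 = 0 ∨ c.2 = w.length + 1) := by
  obtain ⟨hreach, hhalt⟩ := mem_eval.mp hc
  obtain ⟨q | p, i⟩ := c
  · have hpos : Sum.inl q ∈ E → i ≠ 0 := by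
      rintro hq rfl
      obtain rfl := eq_start_of_reaches_inl_zero hreach
      exact hE (by simpa [step] using hhalt) hq
    rw [exists_simConfig_inl_eq_right_iff]
    grind
  · have hle : i ≤ w.length := le_length_of_reaches_inr hreach
    have hturn : i = 0 → M.turnL p = none := by
      rintro rfl
      simpa [step] using hhalt
    rw [exists_simConfig_inr_eq_right_iff]
    grind

theorem acceptRight_langR (hE : M.startT = none → Sum.inl M.start ∉ E) :
    (M.acceptRight E).LangR (acceptRightSet E) = M.LangB E := by
  ext w
  calc w ∈ (M.acceptRight E).LangR (acceptRightSet E)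
    _ ↔ ∃ q ∈ acceptRightSet E, ∃ c ∈ M.haltingConfig w,
          M.simConfig E w c = (Sum.inl q, w.length + 1) := by
        simp only [mem_langR_iff, acceptRight_haltingConfig, Part.mem_map_iff]
    _ ↔ ∃ c ∈ M.haltingConfig w, ∃ q ∈ acceptRightSet E,
          M.simConfig E w c = (Sum.inl q, w.length + 1) := by grind
    _ ↔ ∃ c ∈ M.haltingConfig w, c.1 ∈ E ∧ (c.2 = 0 ∨ c.2 = w.length + 1) :=
        exists_congr fun c => and_congr_right (exists_simConfig_eq_right_iff hE)
    _ ↔ w ∈ M.LangB E := mem_langB_iff.symm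

end AcceptRight

end SRFA

theorem stmt6_general {A Qp Qm : Type} (M : SRFA A Qp Qm) (E : Set (Qp ⊕ Qm)) :
    ∃ (N : SRFA A (Qp ⊕ {p : Qm // Sum.inr p ∈ E}) Qm)
      (F : Set (Qp ⊕ {p : Qm // Sum.inr p ∈ E})), N.LangR F = M.LangB E ∧
      Cardinal.mk (Qp ⊕ {p : Qm // Sum.inr p ∈ E}) =
        Cardinal.mk Qp + Cardinal.mk {p : Qm | Sum.inr p ∈ E} := by
  by_cases hE : M.startT = none ∧ Sum.inl M.start ∈ E
  · refine ⟨SRFA.sweepRight A Qm (Sum.inl M.start), {Sum.inl M.start}, ?_, rfl⟩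
    rw [SRFA.sweepRight_langR_singleton, SRFA.langB_eq_univ_of_startT_eq_none hE.1 hE.2]
  · exact ⟨M.acceptRight E, SRFA.acceptRightSet E,
      SRFA.acceptRight_langR fun hstart hmem => hE ⟨hstart, hmem⟩, rfl⟩

/-- every sRFA with acceptance at both sides, with states
`P₊ ∪ P₋` and accepting states `E`, is equivalent to an ordinary sRFA with
states `Q₊ = P₊ ∪ {p' : p ∈ E ∩ P₋}` and `Q₋ = P₋`; in particular
`|Q₊| = |P₊| + |E ∩ P₋|` and `|Q₋| = |P₋|`. -/
theorem stmt6 (A Pp Pm : Type) [Fintype Pp] [Fintype Pm]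
    (M : SRFA A Pp Pm) (E : Set (Pp ⊕ Pm)) :
    ∃ (N : SRFA A (Pp ⊕ {p : Pm // Sum.inr p ∈ E}) Pm)
      (F : Set (Pp ⊕ {p : Pm // Sum.inr p ∈ E})),
      N.LangR F = M.LangB E ∧
      Nat.card (Pp ⊕ {p : Pm // Sum.inr p ∈ E}) =
        Nat.card Pp + Set.ncard {p : Pm | Sum.inr p ∈ E} := by
  obtain ⟨N, F, hL, hcard⟩ := stmt6_general M E
  exact ⟨N, F, hL, (congrArg Cardinal.toNat hcard).trans
    (Cardinal.toNat_add Cardinal.mk_lt_aleph0 Cardinal.mk_lt_aleph0)⟩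
end

section
/- Over the one-letter alphabet {a}, the language (aa)* ∪ {a} = { aⁿ : n is even } ∪ {a} is not recognized by any one-way reversible automaton (1RFA). -/
open scoped Classical

/-- The unary language `(aa)* ∪ {a}`. -/
def LevenOrA : Set (List Unit) := {w | w.length % 2 = 0 ∨ w = [()]}

/-!
If a finite reversible automaton can read all the words `u`, `uw`, `uww`, … without halting, it
reaches some state twice, and undoing `w` repeatedly turns this repetition into a return to the
state reached after `u`. So `uwᵖ` and `u` lead to the same state for some `p > 0`. For the language
`(aa)* ∪ {a}`, take `u` empty and `w = aa`: since `a` is accepted, so is `a²ᵖ⁺¹`, a word of odd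
length greater than one.
-/

theorem exists_pos_apply_eq_apply_zero {α : Type*} [Finite α] {x : ℕ → α}
    (hx : ∀ m n, x (m + 1) = x (n + 1) → x m = x n) : ∃ p > 0, x p = x 0 := by
  have cancel (p k : ℕ) (h : x (p + k) = x k) : x p = x 0 := by
    induction k with
    | zero => exact h
    | succ k ih => exact ih (hx _ _ h)
  obtain ⟨i, j, hij, h⟩ :=
    (Set.toFinite (Set.range x)).exists_lt_map_eq_of_forall_mem Set.mem_range_self
  refine ⟨j - i, Nat.sub_pos_of_lt hij, cancel (j - i) i ?_⟩
  rw [Nat.sub_add_cancel hij.le, h]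

section Run

variable {A Q : Type} {d : A → Q → Option Q} {q q' : Q} {u v : List A}

theorem runP_append_singleton (d : A → Q → Option Q) (q : Q) (w : List A) (a : A) :
    runP d q (w ++ [a]) = (runP d q w).bind (d a) :=
  List.foldl_concat ..

theorem runP_append_congr (h : runP d q u = runP d q' v) (w : List A) :
    runP d q (u ++ w) = runP d q' (v ++ w) := by
  unfold runP at h ⊢
  rw [List.foldl_append, List.foldl_append, h]

theorem isSome_runP_of_isSome_runP_append (h : (runP d q (u ++ v)).isSome) :
    (runP d q u).isSome := by
  induction v using List.reverseRecOn with
  | nil => simpa only [List.append_nil] using h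
  | append_singleton v a ih =>
    rw [← List.append_assoc, runP_append_singleton] at h
    exact ih (Option.isSome_of_isSome_bind h)

end Run

namespace RFA

variable {A Q : Type} (M : RFA A Q) {u v w : List A}

theorem runP_append_right_cancel {q q' r : Q} (hu : runP M.next q (u ++ w) = some r)
    (hv : runP M.next q' (v ++ w) = some r) : runP M.next q u = runP M.next q' v := by
  induction w using List.reverseRecOn generalizing r with
  | nil => simpa only [List.append_nil] using hu.trans hv.symm
  | append_singleton w a ih =>
    rw [← List.append_assoc, runP_append_singleton, Option.bind_eq_some_iff] at hu hv
    obtain ⟨s, hus, hsr⟩ := hu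
    obtain ⟨t, hvt, htr⟩ := hv
    obtain rfl : s = t := M.inj a s t r hsr htr
    exact ih hus hvt

theorem exists_pos_runP_append_flatten_replicate_eq [Finite Q] {q : Q}
    (h : ∀ n, (runP M.next q (u ++ (List.replicate n w).flatten)).isSome) :
    ∃ p > 0, runP M.next q (u ++ (List.replicate p w).flatten) = runP M.next q u := by
  have append_pow_succ (n : ℕ) : u ++ (List.replicate (n + 1) w).flatten =
      u ++ (List.replicate n w).flatten ++ w := by
    rw [List.replicate_succ', List.flatten_concat, List.append_assoc]
  obtain ⟨p, hp, hreturn⟩ := exists_pos_apply_eq_apply_zero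
    (x := fun n ↦ runP M.next q (u ++ (List.replicate n w).flatten)) fun m n hmn ↦ by
      obtain ⟨r, hr⟩ := Option.isSome_iff_exists.mp (h (n + 1))
      have hr' := hmn.trans hr
      rw [append_pow_succ] at hr hr'
      exact M.runP_append_right_cancel hr' hr
  exact ⟨p, hp, by simpa using hreturn⟩

theorem isSome_runP_of_mem_language (h : w ∈ M.Language) : (runP M.next M.start w).isSome :=
  let ⟨qf, _, hqf⟩ := h
  Option.isSome_iff_exists.mpr ⟨qf, hqf⟩

theorem mem_language_congr (h : runP M.next M.start u = runP M.next M.start v) :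
    u ∈ M.Language ↔ v ∈ M.Language := by
  simp only [Language, Set.mem_ofPred_eq, h]

theorem exists_pos_append_flatten_replicate_append_mem_language_iff [Finite Q]
    (h : ∀ n, ∃ v, u ++ (List.replicate n w).flatten ++ v ∈ M.Language) :
    ∃ p > 0, ∀ v, u ++ (List.replicate p w).flatten ++ v ∈ M.Language ↔ u ++ v ∈ M.Language := by
  have isSome_run (n : ℕ) :
      (runP M.next M.start (u ++ (List.replicate n w).flatten)).isSome := by
    obtain ⟨v, hv⟩ := h n
    exact isSome_runP_of_isSome_runP_append (M.isSome_runP_of_mem_language hv)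
  obtain ⟨p, hp, hreturn⟩ := M.exists_pos_runP_append_flatten_replicate_eq isSome_run
  exact ⟨p, hp, fun v ↦ M.mem_language_congr (runP_append_congr hreturn v)⟩

end RFA

theorem mem_LevenOrA_iff {w : List Unit} : w ∈ LevenOrA ↔ Even w.length ∨ w.length = 1 := by
  rw [LevenOrA, Set.mem_ofPred_eq, Nat.even_iff, List.length_eq_one_iff]
  exact or_congr_right ⟨fun h ↦ ⟨(), h⟩, fun ⟨_, h⟩ ↦ h⟩

/-- `(aa)* ∪ {a}` is not recognized by any 1RFA. -/
theorem stmt7 : ¬ Rec1RFA Unit LevenOrA := by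
  rintro ⟨Q, _, M, hM⟩
  have length_pow (n : ℕ) : (List.replicate n [(), ()]).flatten.length = n * 2 := by
    simp
  obtain ⟨p, hp, hpump⟩ :=
    M.exists_pos_append_flatten_replicate_append_mem_language_iff (u := []) (w := [(), ()])
      fun n ↦ ⟨[], by simp [hM, mem_LevenOrA_iff]⟩
  have hodd : (List.replicate p [(), ()]).flatten ++ [()] ∈ LevenOrA := by
    rw [← hM]
    exact (hpump [()]).mpr (by simp [hM, mem_LevenOrA_iff])
  rw [mem_LevenOrA_iff, List.length_append, length_pow, List.length_singleton, Nat.even_iff] at hodd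
  omega
end
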